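/- arXiv:2405.15091 — 7 statements merged into one kernel-verified Lean document; each statement's English description precedes it below -/
import Mathlib

section
/- For every symplectic alternating algebra L over a field 𝔽 and every integer n ≥ 0, the n-th term of the upper central series equals the orthogonal complement of the (n+1)-st term of the lower central series: Z_n(L) = (L^{n+1})^⊥. Consequently dim Z_n(L) + dim L^{n+1} = dim L. -/
/-!
The compatibility `(u·v, w) = (v·w, u)` together with the skew-symmetry of the form and of the
multiplication gives `(x·y, u) = (x, u·y)` (`form_mul_left`): each right multiplication is
self-adjoint. Hence `x ⊥ U·L` if and only if `x·L ⊆ U^⊥` (`mem_perp_prodSub_top`), which is exactly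
the step from `n` to `n + 1` in the upper central series, so `Z_n(L) = (L^{n+1})^⊥` by induction;
the case `n = 0` is the nondegeneracy of the form. The dimension formula is then the usual
`dim U^⊥ + dim U = dim L` for a nondegenerate form (`finrank_perp_add_finrank`).
-/

variable {𝔽 : Type*} [Field 𝔽] {L : Type*} [AddCommGroup L] [Module 𝔽 L]

structure SymplecticAlternatingAlgebra (𝔽 L : Type*) [Field 𝔽] [AddCommGroup L]
    [Module 𝔽 L] where
  form : L →ₗ[𝔽] L →ₗ[𝔽] 𝔽
  mul : L →ₗ[𝔽] L →ₗ[𝔽] L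
  form_alt : ∀ x, form x x = 0
  form_nondeg : ∀ x, (∀ y, form x y = 0) → x = 0
  mul_alt : ∀ x, mul x x = 0
  compat : ∀ u v w, form (mul u v) w = form (mul v w) u

namespace SymplecticAlternatingAlgebra

variable (S : SymplecticAlternatingAlgebra 𝔽 L)

/-- `U·V`, the span of all products `u·v`. -/
def prodSub (U V : Submodule 𝔽 L) : Submodule 𝔽 L := Submodule.map₂ S.mul U V

/-- An ideal: `I·L ⊆ I`. -/
def IsIdeal (I : Submodule 𝔽 L) : Prop := S.prodSub I ⊤ ≤ I

/-- Orthogonal complement with respect to the form. -/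
def perp (U : Submodule 𝔽 L) : Submodule 𝔽 L where
  carrier := {x | ∀ u ∈ U, S.form x u = 0}
  add_mem' := by
    intro a b ha hb u hu
    simp [map_add, ha u hu, hb u hu]
  zero_mem' := by
    intro u hu
    simp
  smul_mem' := by
    intro c a ha u hu
    simp [ha u hu]

/-- `lcs n = L^(n+1)`: the lower central series, `lcs 0 = L¹ = L`. -/
def lcs : ℕ → Submodule 𝔽 L
  | 0 => ⊤
  | n + 1 => S.prodSub (lcs n) ⊤

/-- `ucs n = Z_n(L)`: the upper central series. -/
def ucs : ℕ → Submodule 𝔽 L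
  | 0 => ⊥
  | n + 1 => ⨅ y : L, (ucs n).comap (S.mul.flip y)

/-- The center `Z(L)`. -/
def center : Submodule 𝔽 L := ⨅ y : L, LinearMap.ker (S.mul.flip y)

/-- Nilpotency: some term of the lower central series vanishes. -/
def IsNilpotent : Prop := ∃ n, S.lcs n = ⊥

/-- `s` generates `L` as an algebra: the smallest subspace containing `s`
and closed under the multiplication is `L` itself. -/
def Generates (s : Set L) : Prop :=
  ∀ M : Submodule 𝔽 L, s ⊆ (M : Set L) → S.prodSub M M ≤ M → M = ⊤

end SymplecticAlternatingAlgebra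

open SymplecticAlternatingAlgebra Module


namespace SymplecticAlternatingAlgebra

theorem form_skew (S : SymplecticAlternatingAlgebra 𝔽 L) (x y : L) :
    S.form x y = -S.form y x :=
  (LinearMap.IsAlt.neg (B := S.form) S.form_alt y x).symm

theorem mul_skew (S : SymplecticAlternatingAlgebra 𝔽 L) (x y : L) :
    S.mul x y = -S.mul y x :=
  (LinearMap.IsAlt.neg (B := S.mul) S.mul_alt y x).symm

/-- Right multiplication by `y` is self-adjoint with respect to the form. -/
theorem form_mul_left (S : SymplecticAlternatingAlgebra 𝔽 L) (x y u : L) :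
    S.form (S.mul x y) u = S.form x (S.mul u y) := by
  rw [S.compat x y u, S.form_skew, S.mul_skew y u, map_neg, neg_neg]

theorem mem_perp_prodSub_top (S : SymplecticAlternatingAlgebra 𝔽 L) (U : Submodule 𝔽 L) (x : L) :
    x ∈ S.perp (S.prodSub U ⊤) ↔ ∀ y, S.mul x y ∈ S.perp U := by
  constructor
  · intro hx y u hu
    rw [form_mul_left]
    exact hx _ (Submodule.apply_mem_map₂ _ hu Submodule.mem_top)
  · intro hx
    -- Being orthogonal to `x` is a linear condition, so it suffices to test generators of `U·L`.
    have h : S.prodSub U ⊤ ≤ LinearMap.ker (S.form x) := by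
      refine Submodule.map₂_le.2 fun u hu y _ => ?_
      rw [LinearMap.mem_ker, ← form_mul_left]
      exact hx y u hu
    exact fun v hv => h hv

theorem finrank_perp_add_finrank [FiniteDimensional 𝔽 L]
    (S : SymplecticAlternatingAlgebra 𝔽 L) (U : Submodule 𝔽 L) :
    finrank 𝔽 (S.perp U) + finrank 𝔽 U = finrank 𝔽 L := by
  -- Mathlib's `orthogonal` puts the tested vector on the right, `perp` on the left.
  have h : S.perp U = LinearMap.BilinForm.orthogonal S.form U := by
    ext x
    refine forall₂_congr fun u _ => ?_
    rw [S.form_skew x u, neg_eq_zero]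
  have hnd : LinearMap.BilinForm.Nondegenerate S.form :=
    ⟨S.form_nondeg, fun x hx => S.form_nondeg x fun y => by rw [S.form_skew, hx y, neg_zero]⟩
  rw [h, LinearMap.BilinForm.finrank_orthogonal hnd]
  exact Nat.sub_add_cancel U.finrank_le

end SymplecticAlternatingAlgebra

theorem ucs_eq_perp_lcs [FiniteDimensional 𝔽 L]
    (S : SymplecticAlternatingAlgebra 𝔽 L) (n : ℕ) :
    S.ucs n = S.perp (S.lcs n) ∧
    Module.finrank 𝔽 (S.ucs n) + Module.finrank 𝔽 (S.lcs n) = Module.finrank 𝔽 L := by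
  have h : S.ucs n = S.perp (S.lcs n) := by
    induction n with
    | zero =>
      refine (eq_bot_iff.2 fun x hx => ?_).symm
      exact S.form_nondeg x fun y => hx y Submodule.mem_top
    | succ n ih =>
      ext x
      simp only [lcs, mem_perp_prodSub_top, ucs, ih, Submodule.mem_iInf, Submodule.mem_comap,
        LinearMap.flip_apply]
  exact ⟨h, h ▸ S.finrank_perp_add_finrank (S.lcs n)⟩
end

section
/- Any one-dimensional ideal of a symplectic alternating algebra L over a field 𝔽 is contained in the center Z(L). -/
/-!
Let `x` span the ideal and write `x·y = c(y) x`. Since `(x·y, y) = (y·y, x) = 0`, we get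
`c(y) (x, y) = 0`, so `(x, y) = 0` whenever `c(y) ≠ 0`. Moreover `(x·y, z) = (z·x, y)
= -(x·z, y) = -c(z) (x, y)`, so in that case `x·y` is orthogonal to all of `L`, and
nondegeneracy of the form gives `x·y = 0`.
-/

variable {𝔽 : Type*} [Field 𝔽] {L : Type*} [AddCommGroup L] [Module 𝔽 L]

open SymplecticAlternatingAlgebra Module


theorem one_dim_ideal_le_center [FiniteDimensional 𝔽 L]
    (S : SymplecticAlternatingAlgebra 𝔽 L) (I : Submodule 𝔽 L) (hI : S.IsIdeal I)
    (hdim : Module.finrank 𝔽 I = 1) :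
    I ≤ S.center := by
  intro x hx
  by_cases hx0 : x = 0
  · rw [hx0]
    exact zero_mem _
  have hc : ∀ y, ∃ c : 𝔽, c • x = S.mul x y := by
    intro y
    have hmem : S.mul x y ∈ I := hI (Submodule.apply_mem_map₂ _ hx Submodule.mem_top)
    obtain ⟨c, hc⟩ := exists_smul_eq_of_finrank_eq_one hdim
      (x := (⟨x, hx⟩ : I)) (by simpa using hx0) ⟨_, hmem⟩
    exact ⟨c, by simpa using congrArg Subtype.val hc⟩
  simp only [center, Submodule.mem_iInf, LinearMap.mem_ker, LinearMap.flip_apply]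
  intro y
  obtain ⟨c, hcy⟩ := hc y
  have hxy : c * S.form x y = 0 := by
    have h := S.compat x y y
    rw [S.mul_alt, ← hcy] at h
    simpa using h
  rcases mul_eq_zero.mp hxy with h0 | h0
  · rw [← hcy, h0, zero_smul]
  · apply S.form_nondeg
    intro z
    obtain ⟨d, hd⟩ := hc z
    have hanti : S.mul z x = -S.mul x z :=
      (LinearMap.IsAlt.neg (B := S.mul) S.mul_alt x z).symm
    rw [S.compat, S.compat, hanti, ← hd]
    simp [h0]
end

section
/- Any two-dimensional ideal I of a symplectic alternating algebra L over a field 𝔽 is abelian (I·I = {0}) and contains a nonzero element of the center, i.e. I ∩ Z(L) ≠ {0}. -/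
/-!
Write `T(u,v,w) = (u·v, w)`; the axioms make `T` an alternating trilinear form. If `I` is an ideal
and `u ∈ I`, then `T(u,v,w) = (u·v,w)` vanishes for `w ∈ I^⊥`, so `T(u,·,·)` descends to an
alternating form on the two-dimensional space `L/I^⊥`. With `I = ⟨x,y⟩` this says
`T(u,w,v) = ((x,w)(y,v) - (y,w)(x,v)) τ(u)` for a linear functional `τ` on `I`
(`form_mul_eq_det`). As `dim I = 2`, `τ` has a nonzero kernel vector, which is central by
nondegeneracy. For `I·I = 0`, the formula gives `T(x,y,v) = (x,y)(y,v)τ(x)`, and the case `v = x`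
forces `(x,y) = 0` or `τ(x) = 0`.
-/

variable {𝔽 : Type*} [Field 𝔽] {L : Type*} [AddCommGroup L] [Module 𝔽 L]

open SymplecticAlternatingAlgebra Module


namespace SymplecticAlternatingAlgebra

lemma form_swap (S : SymplecticAlternatingAlgebra 𝔽 L) (u v : L) :
    S.form u v = -S.form v u := by
  have h := S.form_alt (u + v)
  simp only [map_add, LinearMap.add_apply, S.form_alt] at h
  linear_combination h

lemma mul_swap (S : SymplecticAlternatingAlgebra 𝔽 L) (u v : L) :
    S.mul u v = -S.mul v u := by
  have h := S.mul_alt (u + v)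
  simp only [map_add, LinearMap.add_apply, S.mul_alt, zero_add, add_zero] at h
  exact eq_neg_of_add_eq_zero_right h

lemma form_mul_swap (S : SymplecticAlternatingAlgebra 𝔽 L) (u v w : L) :
    S.form (S.mul u v) w = -S.form (S.mul u w) v := by
  rw [S.compat u w v, S.mul_swap w v, S.compat u v w]
  simp

lemma form_mul_self_right (S : SymplecticAlternatingAlgebra 𝔽 L) (u v : L) :
    S.form (S.mul u v) v = 0 := by
  rw [S.compat, S.mul_alt]
  simp

/-- Nondegeneracy in finite dimension: every linear functional is represented by the form, so a
vector outside a line can be separated from it. -/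
lemma exists_form_eq_one (S : SymplecticAlternatingAlgebra 𝔽 L) [FiniteDimensional 𝔽 L]
    {x y : L} (h : x ∉ Submodule.span 𝔽 {y}) :
    ∃ e, S.form x e = 1 ∧ S.form y e = 0 := by
  obtain ⟨g, hgx, hgy⟩ := Submodule.exists_le_ker_of_notMem h
  have hinj : Function.Injective S.form := by
    rw [injective_iff_map_eq_zero]
    intro a ha
    exact S.form_nondeg a fun b => by simp [ha]
  have hsurj : Function.Surjective S.form :=
    (LinearMap.injective_iff_surjective_of_finrank_eq_finrank
      (Subspace.dual_finrank_eq (K := 𝔽) (V := L)).symm).1 hinj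
  obtain ⟨e, he⟩ := hsurj g
  have hy : g y = 0 := hgy (Submodule.mem_span_singleton_self y)
  refine ⟨-(g x)⁻¹ • e, ?_, ?_⟩
  · rw [map_smul, S.form_swap x e, he]
    simp [hgx]
  · rw [map_smul, S.form_swap y e, he, hy]
    simp

/-- For `u` in the ideal spanned by `x, y`, with `e, f` dual to `x, y`, the alternating form
`(u·w, v)` is a multiple of the determinant of the coordinates of `w, v` modulo `I^⊥`. -/
lemma form_mul_eq_det (S : SymplecticAlternatingAlgebra 𝔽 L) {I : Submodule 𝔽 L}
    (hI : S.IsIdeal I) {x y e f : L} (hspan : ∀ u ∈ I, ∃ a b : 𝔽, u = a • x + b • y)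
    (hxe : S.form x e = 1) (hye : S.form y e = 0) (hyf : S.form y f = 1) (hxf : S.form x f = 0)
    {u : L} (hu : u ∈ I) (w v : L) :
    S.form (S.mul u w) v =
      (S.form x w * S.form y v - S.form y w * S.form x v) * S.form (S.mul u e) f := by
  have hmem : ∀ v, S.mul u v ∈ I := fun v =>
    hI (Submodule.apply_mem_map₂ S.mul hu Submodule.mem_top)
  -- `u` annihilates `I^⊥`, so `u·w` depends only on the coordinates of `w` modulo `I^⊥`.
  have hexp : ∀ w v, S.form (S.mul u w) v =
      S.form x w * S.form (S.mul u e) v + S.form y w * S.form (S.mul u f) v := by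
    intro w v
    obtain ⟨a, b, hab⟩ := hspan _ (hmem v)
    have h := S.form_mul_swap u v (w - S.form x w • e - S.form y w • f)
    rw [hab] at h
    simp only [map_add, map_sub, map_smul, LinearMap.add_apply, LinearMap.sub_apply,
      LinearMap.smul_apply, smul_eq_mul, hxe, hye, hyf, hxf] at h
    linear_combination h
  have h1 := hexp v e
  have h2 := hexp v f
  have h3 := S.form_mul_self_right u e
  have h4 := S.form_mul_self_right u f
  rw [hexp w v, S.form_mul_swap u e v, S.form_mul_swap u f v, h1, h2, h3, h4,
    S.form_mul_swap u f e]
  ring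

end SymplecticAlternatingAlgebra

theorem two_dim_ideal_abelian_and_meets_center [FiniteDimensional 𝔽 L]
    (S : SymplecticAlternatingAlgebra 𝔽 L) (I : Submodule 𝔽 L) (hI : S.IsIdeal I)
    (hdim : Module.finrank 𝔽 I = 2) :
    S.prodSub I I = ⊥ ∧ I ⊓ S.center ≠ ⊥ := by
  let B := Module.finBasisOfFinrankEq 𝔽 I hdim
  obtain ⟨x, hx⟩ : ∃ x : L, x = B 0 := ⟨_, rfl⟩
  obtain ⟨y, hy⟩ : ∃ y : L, y = B 1 := ⟨_, rfl⟩
  have hxI : x ∈ I := hx ▸ (B 0).2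
  have hyI : y ∈ I := hy ▸ (B 1).2
  have hspan : ∀ u ∈ I, ∃ a b : 𝔽, u = a • x + b • y := by
    intro u hu
    refine ⟨B.repr ⟨u, hu⟩ 0, B.repr ⟨u, hu⟩ 1, ?_⟩
    have h := congrArg (Subtype.val) (B.sum_repr ⟨u, hu⟩)
    rw [Fin.sum_univ_two] at h
    simpa [hx, hy] using h.symm
  have hind : ∀ a b : 𝔽, a • x + b • y = 0 → a = 0 ∧ b = 0 := by
    intro a b h
    have h' : a • B 0 + b • B 1 = 0 := Subtype.ext (by simpa [hx, hy] using h)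
    have hli := B.linearIndependent
    rw [Fintype.linearIndependent_iff] at hli
    have h2 := hli ![a, b] (by simpa [Fin.sum_univ_two] using h')
    exact ⟨h2 0, h2 1⟩
  have hxy : x ∉ Submodule.span 𝔽 {y} := by
    rw [Submodule.mem_span_singleton]
    rintro ⟨c, hc⟩
    exact one_ne_zero (hind 1 (-c) (by simp [hc])).1
  have hyx : y ∉ Submodule.span 𝔽 {x} := by
    rw [Submodule.mem_span_singleton]
    rintro ⟨c, hc⟩
    exact one_ne_zero (hind (-c) 1 (by simp [hc])).2
  obtain ⟨e, hxe, hye⟩ := S.exists_form_eq_one hxy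
  obtain ⟨f, hyf, hxf⟩ := S.exists_form_eq_one hyx
  have key := fun {u : L} (hu : u ∈ I) =>
    S.form_mul_eq_det hI hspan hxe hye hyf hxf hu
  constructor
  · have hmul : S.mul x y = 0 := by
      apply S.form_nondeg
      intro v
      -- `0 = (x·y, x) = -(x,y)² τ(x)`.
      have h := key hxI y x
      rw [S.form_mul_swap, S.mul_alt, S.form_alt, S.form_swap y x] at h
      rw [key hxI, S.form_alt y]
      have h' : S.form x y = 0 ∨ S.form (S.mul x e) f = 0 := by
        simpa [S.form_alt] using h
      rcases h' with h' | h' <;> simp [h']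
    rw [eq_bot_iff]
    refine Submodule.map₂_le.2 fun u hu v hv => ?_
    obtain ⟨a, b, rfl⟩ := hspan u hu
    obtain ⟨c, d, rfl⟩ := hspan v hv
    simp [S.mul_alt, S.mul_swap y x, hmul]
  · obtain ⟨z, hzI, hz0, hz⟩ : ∃ z ∈ I, z ≠ 0 ∧ S.form (S.mul z e) f = 0 := by
      by_cases h : S.form (S.mul x e) f = 0
      · refine ⟨x, hxI, fun h0 => hxy (h0 ▸ Submodule.zero_mem _), h⟩
      · refine ⟨S.form (S.mul y e) f • x + (-S.form (S.mul x e) f) • y,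
          I.add_mem (I.smul_mem _ hxI) (I.smul_mem _ hyI),
          fun h0 => h (neg_eq_zero.1 (hind _ _ h0).2), ?_⟩
        simp only [map_add, map_smul, LinearMap.add_apply, LinearMap.smul_apply, smul_eq_mul]
        ring
    refine (Submodule.ne_bot_iff _).2 ⟨z, ⟨hzI, ?_⟩, hz0⟩
    refine (Submodule.mem_iInf _).2 fun w => ?_
    rw [LinearMap.mem_ker, LinearMap.flip_apply]
    exact S.form_nondeg _ fun v => by rw [key hzI, hz, mul_zero]
end

section
/- Let L be a nonzero symplectic alternating algebra over a field 𝔽. Then either L has a nonzero abelian ideal, or L is semi-simple: L decomposes as an internal direct sum L = I₁ ⊕ ⋯ ⊕ I_m of pairwise orthogonal nonzero ideals I₁, …, I_m such that the restriction of the alternating form to each I_j is nondegenerate and each I_j, viewed as an SAA with the restricted form and multiplication, is simple (has no ideals other than {0} and itself). -/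
/-!
Suppose `L` has no nonzero abelian ideal. For every ideal `I` the orthogonal complement `I^⊥` is an
ideal (by `compat`), and `I ⊓ I^⊥` is an abelian ideal, since `(ab, w) = (bw, a) = 0` for all
`a, b` in it; hence it is zero. By finite dimension `L = I ⊕ I^⊥`, and `I · I^⊥ = 0`.

The simple summands are *all* the minimal nonzero ideals. Two distinct ones `A`, `B` are
orthogonal: otherwise minimality gives `B ⊓ A^⊥ = 0`, so that `B` annihilates both `A` and `A^⊥`,
hence all of `L`, and would be a nonzero abelian ideal. Orthogonality gives independence, and
independence gives finiteness. Their sum `M` is an ideal; a minimal ideal inside `M^⊥` would lie in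
`M ⊓ M^⊥ = 0`, so `M^⊥ = 0` and `M = L`. Finally, an ideal of the algebra `A` is also annihilated by
`A^⊥`, so it is an ideal of `L`, and minimality of `A` makes `A` simple.
-/

variable {𝔽 : Type*} [Field 𝔽] {L : Type*} [AddCommGroup L] [Module 𝔽 L]

open SymplecticAlternatingAlgebra Module

namespace SymplecticAlternatingAlgebra

variable (S : SymplecticAlternatingAlgebra 𝔽 L)

lemma mul_swap_s5 (x y : L) : S.mul x y = -S.mul y x := by
  have h := S.mul_alt (x + y)
  simp only [map_add, LinearMap.add_apply, S.mul_alt, zero_add, add_zero] at h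
  rw [add_comm] at h
  exact eq_neg_of_add_eq_zero_left h

lemma form_swap_s5 (x y : L) : S.form x y = -S.form y x := by
  have h := S.form_alt (x + y)
  simp only [map_add, LinearMap.add_apply, S.form_alt, zero_add, add_zero] at h
  rw [add_comm] at h
  exact eq_neg_of_add_eq_zero_left h

lemma isIdeal_iff {I : Submodule 𝔽 L} : S.IsIdeal I ↔ ∀ x ∈ I, ∀ y, S.mul x y ∈ I := by
  simp [IsIdeal, prodSub, Submodule.map₂_le]

variable {S}

lemma IsIdeal.mul_mem {I : Submodule 𝔽 L} (h : S.IsIdeal I) {x : L} (hx : x ∈ I) (y : L) :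
    S.mul x y ∈ I := S.isIdeal_iff.1 h x hx y

lemma IsIdeal.mul_mem' {I : Submodule 𝔽 L} (h : S.IsIdeal I) {x : L} (hx : x ∈ I) (y : L) :
    S.mul y x ∈ I := by
  rw [S.mul_swap_s5]
  exact I.neg_mem (h.mul_mem hx y)

lemma IsIdeal.inf {I J : Submodule 𝔽 L} (hI : S.IsIdeal I) (hJ : S.IsIdeal J) :
    S.IsIdeal (I ⊓ J) :=
  S.isIdeal_iff.2 fun _ hx y => ⟨hI.mul_mem hx.1 y, hJ.mul_mem hx.2 y⟩

lemma IsIdeal.iSup {ι : Sort*} {I : ι → Submodule 𝔽 L} (h : ∀ i, S.IsIdeal (I i)) :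
    S.IsIdeal (⨆ i, I i) := by
  rw [IsIdeal, prodSub, Submodule.map₂_iSup_left]
  exact iSup_mono h

lemma IsIdeal.perp {I : Submodule 𝔽 L} (h : S.IsIdeal I) : S.IsIdeal (S.perp I) := by
  refine S.isIdeal_iff.2 fun x hx y u hu => ?_
  rw [S.compat, S.form_swap_s5, hx _ (h.mul_mem' hu y), neg_zero]

lemma le_perp_comm {I J : Submodule 𝔽 L} (h : I ≤ S.perp J) : J ≤ S.perp I := by
  intro x hx u hu
  rw [S.form_swap_s5, h hu x hx, neg_zero]

variable (S) in
/-- The algebra has no nonzero abelian ideal. -/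
def NoAbelian : Prop := ∀ I : Submodule 𝔽 L, S.IsIdeal I → (∀ x ∈ I, ∀ y ∈ I, S.mul x y = 0) → I = ⊥

lemma NoAbelian.inf_perp (hS : S.NoAbelian) {I : Submodule 𝔽 L} (hI : S.IsIdeal I) :
    I ⊓ S.perp I = ⊥ := by
  refine hS _ (hI.inf hI.perp) fun a ha b hb => S.form_nondeg _ fun w => ?_
  rw [S.compat, S.form_swap_s5, ha.2 _ (hI.mul_mem hb.1 w), neg_zero]

lemma NoAbelian.mul_perp (hS : S.NoAbelian) {I : Submodule 𝔽 L} (hI : S.IsIdeal I) {x y : L}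
    (hx : x ∈ I) (hy : y ∈ S.perp I) : S.mul x y = 0 := by
  have h : S.mul x y ∈ I ⊓ S.perp I := ⟨hI.mul_mem hx y, hI.perp.mul_mem' hy x⟩
  rwa [hS.inf_perp hI, Submodule.mem_bot] at h

/-- A finite-dimensional subspace on which the form is nondegenerate, together with its
orthogonal complement, spans `L`: every functional `(x, ·)` on it is represented from inside it. -/
lemma sup_perp_eq_top [FiniteDimensional 𝔽 L] {I : Submodule 𝔽 L} (h : I ⊓ S.perp I = ⊥) :
    I ⊔ S.perp I = ⊤ := by
  let f : L →ₗ[𝔽] Module.Dual 𝔽 I := (LinearMap.lcomp 𝔽 𝔽 I.subtype) ∘ₗ S.form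
  have hf : ∀ x (u : I), f x u = S.form x u := fun _ _ => rfl
  have hinj : Function.Injective (f ∘ₗ I.subtype) := by
    rw [← LinearMap.ker_eq_bot, LinearMap.ker_eq_bot']
    intro a ha
    have : (a : L) ∈ I ⊓ S.perp I := ⟨a.2, fun u hu => LinearMap.congr_fun ha ⟨u, hu⟩⟩
    rw [h, Submodule.mem_bot] at this
    exact Subtype.ext this
  have hsurj := (LinearMap.injective_iff_surjective_of_finrank_eq_finrank
    (Subspace.dual_finrank_eq (K := 𝔽) (V := I)).symm).1 hinj
  refine eq_top_iff.2 fun x _ => ?_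
  obtain ⟨a, ha⟩ := hsurj (f x)
  refine Submodule.mem_sup.2 ⟨a, a.2, x - a, fun u hu => ?_, by abel⟩
  have := LinearMap.congr_fun ha ⟨u, hu⟩
  rw [map_sub, LinearMap.sub_apply, sub_eq_zero]
  exact this.symm

variable (S) in
/-- A minimal nonzero ideal. -/
def IsMinIdeal (A : Submodule 𝔽 L) : Prop :=
  S.IsIdeal A ∧ A ≠ ⊥ ∧ ∀ K, S.IsIdeal K → K ≤ A → K = ⊥ ∨ K = A

lemma IsIdeal.exists_isMinIdeal_le [FiniteDimensional 𝔽 L] {I : Submodule 𝔽 L}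
    (hI : S.IsIdeal I) (h : I ≠ ⊥) : ∃ A ≤ I, S.IsMinIdeal A := by
  obtain ⟨A, ⟨hA, hA0, hAI⟩, hmin⟩ := wellFounded_lt.has_min
    {J : Submodule 𝔽 L | S.IsIdeal J ∧ J ≠ ⊥ ∧ J ≤ I} ⟨I, hI, h, le_rfl⟩
  refine ⟨A, hAI, hA, hA0, fun K hK hKA => or_iff_not_imp_left.2 fun hK0 => ?_⟩
  exact hKA.eq_of_not_lt (hmin K ⟨hK, hK0, hKA.trans hAI⟩)

lemma NoAbelian.le_perp [FiniteDimensional 𝔽 L] (hS : S.NoAbelian) {A B : Submodule 𝔽 L}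
    (hA : S.IsMinIdeal A) (hB : S.IsMinIdeal B) (hne : A ≠ B) : B ≤ S.perp A := by
  rcases hB.2.2 _ (hB.1.inf hA.1.perp) inf_le_left with h | h
  · refine absurd (hS B hB.1 fun x hx y _ => ?_) hB.2.1
    have hAB : B ⊓ A = ⊥ := by
      rcases hB.2.2 _ (hB.1.inf hA.1) inf_le_left with h' | h'
      · exact h'
      · rcases hA.2.2 B hB.1 (inf_eq_left.1 h') with h'' | h''
        · exact absurd h'' hB.2.1
        · exact absurd h''.symm hne
    have hy : y ∈ A ⊔ S.perp A := by
      rw [sup_perp_eq_top (hS.inf_perp hA.1)]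
      trivial
    obtain ⟨a, ha, c, hc, rfl⟩ := Submodule.mem_sup.1 hy
    have h1 : S.mul x a ∈ B ⊓ A := ⟨hB.1.mul_mem hx a, hA.1.mul_mem' ha x⟩
    have h2 : S.mul x c ∈ B ⊓ S.perp A := ⟨hB.1.mul_mem hx c, hA.1.perp.mul_mem' hc x⟩
    rw [hAB, Submodule.mem_bot] at h1
    rw [h, Submodule.mem_bot] at h2
    rw [map_add, h1, h2, add_zero]
  · exact inf_eq_left.1 h

lemma NoAbelian.iSupIndep [FiniteDimensional 𝔽 L] (hS : S.NoAbelian) :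
    iSupIndep (fun A : {A // S.IsMinIdeal A} => (A : Submodule 𝔽 L)) := by
  intro A
  rw [disjoint_iff, eq_bot_iff, ← hS.inf_perp A.2.1]
  exact inf_le_inf_left _ (iSup₂_le fun B hB =>
    hS.le_perp A.2 B.2 fun h => hB (Subtype.ext h.symm))

lemma NoAbelian.iSup_eq_top [FiniteDimensional 𝔽 L] (hS : S.NoAbelian) :
    (⨆ A : {A // S.IsMinIdeal A}, (A : Submodule 𝔽 L)) = ⊤ := by
  have hM : S.IsIdeal (⨆ A : {A // S.IsMinIdeal A}, (A : Submodule 𝔽 L)) :=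
    IsIdeal.iSup fun A => A.2.1
  have hperp : S.perp (⨆ A : {A // S.IsMinIdeal A}, (A : Submodule 𝔽 L)) = ⊥ := by
    by_contra h
    obtain ⟨A, hAle, hA⟩ := hM.perp.exists_isMinIdeal_le h
    refine hA.2.1 (eq_bot_iff.2 ?_)
    rw [← hS.inf_perp hM]
    exact le_inf (le_iSup (fun A : {A // S.IsMinIdeal A} => (A : Submodule 𝔽 L)) ⟨A, hA⟩) hAle
  have h := sup_perp_eq_top (hS.inf_perp hM)
  rwa [hperp, sup_bot_eq] at h

/-- An ideal of the algebra `A` is an ideal of `L`, because `A^⊥` annihilates `A`. -/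
lemma NoAbelian.isIdeal_of_le [FiniteDimensional 𝔽 L] (hS : S.NoAbelian) {A K : Submodule 𝔽 L}
    (hA : S.IsIdeal A) (hKA : K ≤ A) (hK : S.prodSub K A ≤ K) : S.IsIdeal K := by
  refine S.isIdeal_iff.2 fun x hx y => ?_
  have hy : y ∈ A ⊔ S.perp A := by
    rw [sup_perp_eq_top (hS.inf_perp hA)]
    trivial
  obtain ⟨a, ha, c, hc, rfl⟩ := Submodule.mem_sup.1 hy
  rw [map_add, hS.mul_perp hA (hKA hx) hc, add_zero]
  exact hK (Submodule.apply_mem_map₂ _ hx ha)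

end SymplecticAlternatingAlgebra

theorem abelian_ideal_or_semisimple [FiniteDimensional 𝔽 L]
    (S : SymplecticAlternatingAlgebra 𝔽 L) (hL : Nontrivial L) :
    (∃ I : Submodule 𝔽 L, S.IsIdeal I ∧ I ≠ ⊥ ∧ S.prodSub I I = ⊥) ∨
    (∃ (m : ℕ) (I : Fin m → Submodule 𝔽 L),
      (∀ j, S.IsIdeal (I j)) ∧
      (∀ j, I j ≠ ⊥) ∧
      (∀ j k, j ≠ k → ∀ u ∈ I j, ∀ v ∈ I k, S.form u v = 0) ∧
      iSupIndep I ∧ (⨆ j, I j) = ⊤ ∧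
      (∀ j, ∀ x ∈ I j, (∀ y ∈ I j, S.form x y = 0) → x = 0) ∧
      (∀ j, ∀ K : Submodule 𝔽 L, K ≤ I j → S.prodSub K (I j) ≤ K →
        K = ⊥ ∨ K = I j)) := by
  by_cases hS : S.NoAbelian
  · right
    have hfin : Finite {A // S.IsMinIdeal A} :=
      WellFoundedGT.finite_of_iSupIndep hS.iSupIndep fun A => A.2.2.1
    obtain ⟨m, ⟨e⟩⟩ := Finite.exists_equiv_fin {A // S.IsMinIdeal A}
    refine ⟨m, fun j => (e.symm j : Submodule 𝔽 L), fun j => (e.symm j).2.1,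
      fun j => (e.symm j).2.2.1, ?_, hS.iSupIndep.comp e.symm.injective, ?_, ?_, ?_⟩
    · intro j k hjk u hu v hv
      refine hS.le_perp (e.symm k).2 (e.symm j).2 (fun h => hjk ?_) hu v hv
      exact (e.symm.injective (Subtype.ext h)).symm
    · rw [← hS.iSup_eq_top]
      exact e.symm.iSup_comp (g := fun A : {A // S.IsMinIdeal A} => (A : Submodule 𝔽 L))
    · intro j x hx hxy
      have h : x ∈ (e.symm j : Submodule 𝔽 L) ⊓ S.perp (e.symm j : Submodule 𝔽 L) := ⟨hx, hxy⟩
      rwa [hS.inf_perp (e.symm j).2.1, Submodule.mem_bot] at h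
    · intro j K hKle hK
      exact (e.symm j).2.2.2 K (hS.isIdeal_of_le (e.symm j).2.1 hKle hK) hKle
  · left
    unfold NoAbelian at hS
    push Not at hS
    obtain ⟨I, hI, hab, h0⟩ := hS
    refine ⟨I, hI, h0, eq_bot_iff.2 (Submodule.map₂_le.2 fun x hx y hy => ?_)⟩
    rw [Submodule.mem_bot]
    exact hab x hx y hy
end

section
/- Let L be a symplectic alternating algebra over a field 𝔽 and let I be an abelian ideal of L such that L^{n+1} ⊆ I (i.e. L is abelian-by-(nilpotent of class at most n)). Then L is nilpotent of class at most 2n + 1, i.e. L^{2n+2} = {0}. -/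
/-!
Right multiplication by any `v` is self-adjoint for the form: `(u·v, w) = (u, w·v)`. Hence, taking
a left-normed product `x·y₁⋯y_{2n+1}` (these span `L^{2n+2}`) and pairing it with `w`, the last
`n` factors can be moved to the other side, giving `(a·y_{n+1}, b)` with `a, b ∈ L^{n+1} ⊆ I`. By
compatibility this equals `(b·a, y_{n+1})`, which is zero since `I` is abelian. As `w` is arbitrary,
nondegeneracy of the form gives `L^{2n+2} = 0`.
-/

variable {𝔽 : Type*} [Field 𝔽] {L : Type*} [AddCommGroup L] [Module 𝔽 L]

open SymplecticAlternatingAlgebra Module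

namespace SymplecticAlternatingAlgebra

/-- Right multiplication by `v` is self-adjoint with respect to the form. -/
theorem form_mul_right (S : SymplecticAlternatingAlgebra 𝔽 L) (u v w : L) :
    S.form (S.mul u v) w = S.form u (S.mul w v) := by
  have hform : S.form.IsAlt := S.form_alt
  have hmul : S.mul.IsAlt := S.mul_alt
  rw [S.compat, ← hform.neg, ← hmul.neg w v, map_neg, neg_neg]

/-- `L^{n+2+i}` is orthogonal to `L^{j+1}` whenever `i + j = n` and `L^{n+1}` lies in an
abelian subspace `I`. -/
theorem form_lcs_eq_zero (S : SymplecticAlternatingAlgebra 𝔽 L) (I : Submodule 𝔽 L)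
    (hab : S.prodSub I I = ⊥) (n : ℕ) (hle : S.lcs n ≤ I) (i : ℕ) :
    ∀ j, i + j = n → ∀ z ∈ S.lcs (n + 1 + i), ∀ b ∈ S.lcs j, S.form z b = 0 := by
  induction i with
  | zero =>
    intro j hj z hz b hb
    obtain rfl : j = n := by omega
    have hz' : z ∈ Submodule.map₂ S.mul (S.lcs j) ⊤ := hz
    have hker : Submodule.map₂ S.mul (S.lcs j) ⊤ ≤ LinearMap.ker (S.form.flip b) := by
      refine Submodule.map₂_le.2 fun a ha y _ => ?_
      have hba : S.mul b a ∈ S.prodSub I I := Submodule.apply_mem_map₂ _ (hle hb) (hle ha)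
      rw [hab, Submodule.mem_bot] at hba
      rw [LinearMap.mem_ker, LinearMap.flip_apply, S.compat, S.compat, hba]
      simp
    exact hker hz'
  | succ i ih =>
    intro j hj z hz b hb
    have hz' : z ∈ Submodule.map₂ S.mul (S.lcs (n + 1 + i)) ⊤ := hz
    have hker : Submodule.map₂ S.mul (S.lcs (n + 1 + i)) ⊤ ≤ LinearMap.ker (S.form.flip b) := by
      refine Submodule.map₂_le.2 fun c hc y _ => ?_
      rw [LinearMap.mem_ker, LinearMap.flip_apply, form_mul_right]
      exact ih (j + 1) (by omega) c hc _ (Submodule.apply_mem_map₂ _ hb Submodule.mem_top)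
    exact hker hz'

end SymplecticAlternatingAlgebra

theorem abelian_by_nilpotent_is_nilpotent [FiniteDimensional 𝔽 L]
    (S : SymplecticAlternatingAlgebra 𝔽 L) (I : Submodule 𝔽 L) (hI : S.IsIdeal I)
    (hab : S.prodSub I I = ⊥) (n : ℕ) (hle : S.lcs n ≤ I) :
    S.lcs (2 * n + 1) = ⊥ := by
  rw [show 2 * n + 1 = n + 1 + n by omega, eq_bot_iff]
  intro z hz
  exact S.form_nondeg z fun y =>
    S.form_lcs_eq_zero I hab n hle n 0 (by omega) z hz y Submodule.mem_top
end

section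
/- Let I and J be ideals of a symplectic alternating algebra L over a field 𝔽. Then I·L ⊆ J if and only if I·(J^⊥) = {0}. In particular, for every m ≥ 1, L^m · Z_m(L) = {0}. -/
/-!
The identity `(u·w, v) = (w, u·v)` (cyclicity of `(u·v, w)` together with skew-symmetry) says that
`u·w = 0` exactly when `w` is orthogonal to `u·L`. Hence `I·L ⊆ J` forces `I·J^⊥ = 0`; conversely,
`I·J^⊥ = 0` says `J^⊥ ⊆ (I·L)^⊥`, and `J^⊥⊥ = J` (nondegeneracy and finite dimension) gives
`I·L ⊆ J`.

For the central series, induction on `n` with the same identity shows that `Z_n(L)` is orthogonal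
to `L^(n+1) = L^n·L`, so that `(u·z, v) = (z, u·v) = 0` for `u ∈ L^n`, `z ∈ Z_n(L)` and all `v`.
-/

variable {𝔽 : Type*} [Field 𝔽] {L : Type*} [AddCommGroup L] [Module 𝔽 L]

open SymplecticAlternatingAlgebra Module

namespace SymplecticAlternatingAlgebra

theorem form_mul_eq {𝔽 L : Type*} [Field 𝔽] [AddCommGroup L] [Module 𝔽 L]
    (S : SymplecticAlternatingAlgebra 𝔽 L) (u v w : L) :
    S.form (S.mul u w) v = S.form w (S.mul u v) := by
  have hm : S.mul v u = -S.mul u v :=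
    (LinearMap.IsAlt.neg (B := S.mul) S.mul_alt u v).symm
  have hf : S.form (S.mul u v) w = -S.form w (S.mul u v) :=
    (LinearMap.IsAlt.neg (B := S.form) S.form_alt w (S.mul u v)).symm
  rw [S.compat, S.compat, hm, map_neg, LinearMap.neg_apply, hf, neg_neg]

theorem mem_of_forall_perp {𝔽 L : Type*} [Field 𝔽] [AddCommGroup L] [Module 𝔽 L]
    [FiniteDimensional 𝔽 L] (S : SymplecticAlternatingAlgebra 𝔽 L) (J : Submodule 𝔽 L) (x : L)
    (h : ∀ w ∈ S.perp J, S.form w x = 0) : x ∈ J := by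
  by_contra hx
  obtain ⟨f, hfx, hfJ⟩ := Submodule.exists_le_ker_of_notMem hx
  have hinj : Function.Injective S.form := by
    rw [injective_iff_map_eq_zero]
    intro a ha
    exact S.form_nondeg a fun y => by rw [ha]; rfl
  -- An injective map from `L` to its dual is onto, so `f` is represented by a vector.
  have hsurj : Function.Surjective S.form :=
    (LinearMap.injective_iff_surjective_of_finrank_eq_finrank
      (Subspace.dual_finrank_eq (K := 𝔽) (V := L)).symm).1 hinj
  obtain ⟨y, rfl⟩ := hsurj f
  exact hfx (h y fun u hu => hfJ hu)

/-- `Z_n(L)` is orthogonal to `L^(n+1)`. -/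
theorem ucs_perp_lcs {𝔽 L : Type*} [Field 𝔽] [AddCommGroup L] [Module 𝔽 L]
    (S : SymplecticAlternatingAlgebra 𝔽 L) (n : ℕ) :
    ∀ z ∈ S.ucs n, ∀ x ∈ S.lcs n, S.form z x = 0 := by
  induction n with
  | zero =>
    intro z hz x _
    have : z = 0 := by simpa [ucs] using hz
    simp [this]
  | succ n ih =>
    intro z hz x hx
    have hz' : ∀ y, S.mul z y ∈ S.ucs n := by
      simpa [ucs, Submodule.mem_iInf] using hz
    have hle : S.prodSub (S.lcs n) ⊤ ≤ LinearMap.ker (S.form z) := by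
      refine Submodule.map₂_le.2 fun u hu v _ => ?_
      have hm : S.mul u z = -S.mul z u :=
        (LinearMap.IsAlt.neg (B := S.mul) S.mul_alt z u).symm
      rw [LinearMap.mem_ker, ← form_mul_eq, hm, map_neg, LinearMap.neg_apply, form_mul_eq,
        LinearMap.IsAlt.neg (B := S.form) S.form_alt]
      exact ih _ (hz' v) u hu
    exact hle hx

end SymplecticAlternatingAlgebra

theorem ideal_prod_le_iff_perp [FiniteDimensional 𝔽 L]
    (S : SymplecticAlternatingAlgebra 𝔽 L) (I J : Submodule 𝔽 L)
    (hI : S.IsIdeal I) (hJ : S.IsIdeal J) :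
    (S.prodSub I ⊤ ≤ J ↔ S.prodSub I (S.perp J) = ⊥) ∧
    (∀ m : ℕ, 1 ≤ m → S.prodSub (S.lcs (m - 1)) (S.ucs m) = ⊥) := by
  refine ⟨⟨fun h => ?_, fun h => ?_⟩, fun m hm => ?_⟩
  · refine le_bot_iff.1 (Submodule.map₂_le.2 fun u hu w hw => ?_)
    refine (Submodule.mem_bot 𝔽).2 (S.form_nondeg _ fun v => ?_)
    rw [form_mul_eq]
    exact hw _ (h (Submodule.apply_mem_map₂ _ hu trivial))
  · refine Submodule.map₂_le.2 fun u hu v _ => S.mem_of_forall_perp J _ fun w hw => ?_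
    have h0 : S.mul u w ∈ S.prodSub I (S.perp J) := Submodule.apply_mem_map₂ _ hu hw
    rw [h, Submodule.mem_bot] at h0
    rw [← form_mul_eq, h0, map_zero, LinearMap.zero_apply]
  · obtain ⟨n, rfl⟩ := Nat.exists_eq_add_of_le' hm
    refine le_bot_iff.1 (Submodule.map₂_le.2 fun u hu z hz => ?_)
    refine (Submodule.mem_bot 𝔽).2 (S.form_nondeg _ fun v => ?_)
    rw [form_mul_eq]
    exact S.ucs_perp_lcs (n + 1) z hz _ (Submodule.apply_mem_map₂ _ hu trivial)
end

section
/- Let L be a nilpotent symplectic alternating algebra over a field 𝔽. For every i ≥ 2, the terms of the upper central series satisfy the inequality dim Z_i(L) − dim Z_{i−1}(L) ≤ ½ (dim Z_{i−1}(L) − dim Z_{i−2}(L)) (dim Z_{i−1}(L) + dim Z_{i−2}(L) − 1). -/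
/-!
The upper and lower central series are dual to each other: moving factors across the form with
`(u·v, w) = (v·w, u)` gives `Z_n(L) = (L^{n+1})^⊥` (`ucs_eq_orthogonal_lcs`), so by nondegeneracy
`dim Z_n(L) + dim L^{n+1} = dim L`. The claim thereby becomes an upper bound for
`dim L^i / L^{i+1}`.

The product induces a surjection onto `L^i / L^{i+1}` from `L^{i-1} ∧ L`, in which `L^i` may be
killed since `L^i·L = L^{i+1}`. Put `r = dim L^{i-1}/L^i` and `s = dim L/L^{i-1}`, so that
`s = dim Z_{i-2}` and `r + s = dim Z_{i-1}`. Products of two elements of a complement of `L^i` in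
`L^{i-1}` contribute at most `r(r-1)/2` dimensions because the product is alternating, and products
of such elements with a complement of `L^{i-1}` in `L` contribute at most `r s`
(`two_mul_finrank_map₂_le`). Finally `r(r-1) + 2rs = r((r+s) + s - 1)`.
-/

variable {𝔽 : Type*} [Field 𝔽] {L : Type*} [AddCommGroup L] [Module 𝔽 L]

open SymplecticAlternatingAlgebra Module


theorem finrank_map₂_le [FiniteDimensional 𝔽 L] (f : L →ₗ[𝔽] L →ₗ[𝔽] L) (U V : Submodule 𝔽 L) :
    finrank 𝔽 (Submodule.map₂ f U V) ≤ finrank 𝔽 U * finrank 𝔽 V := by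
  let b := finBasis 𝔽 U
  let c := finBasis 𝔽 V
  have hle : Submodule.map₂ f U V ≤
      Submodule.span 𝔽 (Set.range fun p : Fin (finrank 𝔽 U) × Fin (finrank 𝔽 V) =>
        f (b p.1) (c p.2)) := by
    rw [Submodule.map₂_le]
    intro u hu v hv
    have hu' := congrArg Subtype.val (b.sum_repr ⟨u, hu⟩)
    have hv' := congrArg Subtype.val (c.sum_repr ⟨v, hv⟩)
    simp only [Submodule.coe_sum, Submodule.coe_smul] at hu' hv'
    rw [← hu', ← hv']
    simp only [map_sum, map_smul, LinearMap.sum_apply, LinearMap.smul_apply]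
    refine Submodule.sum_mem _ fun j _ => Submodule.smul_mem _ _ ?_
    refine Submodule.sum_mem _ fun i _ => Submodule.smul_mem _ _ ?_
    exact Submodule.subset_span ⟨(i, j), rfl⟩
  refine (Submodule.finrank_mono hle).trans ((finrank_range_le_card _).trans ?_)
  simp

/-- For an alternating product, `U·U` is spanned by the products `bᵢ·bⱼ` with `j < i` of basis
vectors of `U`. -/
theorem two_mul_finrank_map₂_self_le [FiniteDimensional 𝔽 L] (f : L →ₗ[𝔽] L →ₗ[𝔽] L)
    (hf : f.IsAlt) (U : Submodule 𝔽 L) :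
    2 * finrank 𝔽 (Submodule.map₂ f U U) ≤ finrank 𝔽 U * (finrank 𝔽 U - 1) := by
  let b := finBasis 𝔽 U
  let g : (Σ i : Fin (finrank 𝔽 U), Fin (i : ℕ)) → L := fun p =>
    f (b p.1) (b ⟨p.2, p.2.2.trans p.1.2⟩)
  have hle : Submodule.map₂ f U U ≤ Submodule.span 𝔽 (Set.range g) := by
    rw [Submodule.map₂_le]
    intro u hu v hv
    have hu' := congrArg Subtype.val (b.sum_repr ⟨u, hu⟩)
    have hv' := congrArg Subtype.val (b.sum_repr ⟨v, hv⟩)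
    simp only [Submodule.coe_sum, Submodule.coe_smul] at hu' hv'
    have key : ∀ i j, f (b i) (b j) ∈ Submodule.span 𝔽 (Set.range g) := by
      intro i j
      rcases lt_trichotomy i j with h | h | h
      · rw [← hf.neg]
        exact Submodule.neg_mem _ (Submodule.subset_span ⟨⟨j, ⟨i, h⟩⟩, rfl⟩)
      · rw [h, hf.self_eq_zero]
        exact Submodule.zero_mem _
      · exact Submodule.subset_span ⟨⟨i, ⟨j, h⟩⟩, rfl⟩
    rw [← hu', ← hv']
    simp only [map_sum, map_smul, LinearMap.sum_apply, LinearMap.smul_apply]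
    refine Submodule.sum_mem _ fun j _ => Submodule.smul_mem _ _ ?_
    exact Submodule.sum_mem _ fun i _ => Submodule.smul_mem _ _ (key i j)
  have h := (Submodule.finrank_mono hle).trans (finrank_range_le_card _)
  rw [Fintype.card_sigma] at h
  simp only [Fintype.card_fin] at h
  rw [Fin.sum_univ_eq_sum_range (fun i => i)] at h
  have := Finset.sum_range_id_mul_two (finrank 𝔽 U)
  lia

/-- If `N ≤ W` and `N·L ≤ T`, then `W·L` is contained in the sum of `T` and a subspace of dimension
at most `r(r-1)/2 + rs`, whence the bound on `dim (W·L)`; here `r = dim W/N` and `s = dim L/W`. -/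
theorem two_mul_finrank_map₂_le [FiniteDimensional 𝔽 L] (f : L →ₗ[𝔽] L →ₗ[𝔽] L)
    (hf : f.IsAlt) {N W T : Submodule 𝔽 L} (hNW : N ≤ W) (hT : Submodule.map₂ f N ⊤ ≤ T)
    {r s : ℕ} (hr : finrank 𝔽 W = finrank 𝔽 N + r) (hs : finrank 𝔽 L = finrank 𝔽 W + s) :
    2 * finrank 𝔽 (Submodule.map₂ f W ⊤) ≤ 2 * finrank 𝔽 T + r * (r - 1) + 2 * (r * s) := by
  obtain ⟨C, hC⟩ := Submodule.exists_isCompl N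
  obtain ⟨V', hV⟩ := Submodule.exists_isCompl W
  obtain ⟨W', hW'⟩ : ∃ W', W' = C ⊓ W := ⟨_, rfl⟩
  have hsup : N ⊔ W' = W := by
    rw [hW', ← sup_inf_assoc_of_le C hNW, hC.sup_eq_top, top_inf_eq]
  have hinf : N ⊓ W' = ⊥ := by
    rw [hW', ← inf_assoc, hC.inf_eq_bot, bot_inf_eq]
  have hr' : finrank 𝔽 W' = r := by
    have := Submodule.finrank_sup_add_finrank_inf_eq N W'
    rw [hsup, hinf, finrank_bot] at this
    lia
  have hs' : finrank 𝔽 V' = s := by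
    have := Submodule.finrank_add_eq_of_isCompl hV
    lia
  have hle : Submodule.map₂ f W ⊤ ≤
      T ⊔ (Submodule.map₂ f W' W' ⊔ Submodule.map₂ f W' V') := by
    have h1 : Submodule.map₂ f W ⊤ = Submodule.map₂ f N ⊤ ⊔ Submodule.map₂ f W' ⊤ := by
      rw [← Submodule.map₂_sup_left, hsup]
    have h2 : Submodule.map₂ f W' ⊤ = Submodule.map₂ f W' N ⊔
        Submodule.map₂ f W' W' ⊔ Submodule.map₂ f W' V' := by
      rw [← Submodule.map₂_sup_right, ← Submodule.map₂_sup_right, hsup, hV.sup_eq_top]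
    have h3 : Submodule.map₂ f W' N ≤ T := by
      rw [Submodule.map₂_le]
      intro w _ n hn
      rw [← hf.neg]
      exact T.neg_mem (hT (Submodule.apply_mem_map₂ f hn Submodule.mem_top))
    rw [h1, h2, sup_assoc]
    exact sup_le (hT.trans le_sup_left) (sup_le_sup_right h3 _)
  have e1 := Submodule.finrank_mono hle
  have e2 := Submodule.finrank_add_le_finrank_add_finrank T
    (Submodule.map₂ f W' W' ⊔ Submodule.map₂ f W' V')
  have e3 := Submodule.finrank_add_le_finrank_add_finrank
    (Submodule.map₂ f W' W') (Submodule.map₂ f W' V')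
  have e4 := two_mul_finrank_map₂_self_le f hf W'
  have e5 := finrank_map₂_le f W' V'
  rw [hr'] at e4
  rw [hr', hs'] at e5
  lia

namespace SymplecticAlternatingAlgebra

variable (S : SymplecticAlternatingAlgebra 𝔽 L)

theorem lcs_succ_le (n : ℕ) : S.lcs (n + 1) ≤ S.lcs n := by
  induction n with
  | zero => exact le_top
  | succ n ih => exact Submodule.map₂_le_map₂_left ih

theorem form_mul_right_s18 (w x y : L) : S.form w (S.mul x y) = S.form (S.mul w y) x := by
  have hform : S.form.IsAlt := S.form_alt
  have hmul : S.mul.IsAlt := S.mul_alt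
  rw [← hform.neg, S.compat, ← hmul.neg w y, map_neg, LinearMap.neg_apply, neg_neg]

/-- `Z_n(L) = (L^{n+1})^⊥`. -/
theorem ucs_eq_orthogonal_lcs (n : ℕ) :
    S.ucs n = LinearMap.BilinForm.orthogonal S.form (S.lcs n) := by
  induction n with
  | zero =>
    have hform : S.form.IsAlt := S.form_alt
    refine (eq_bot_iff.2 fun x hx => S.form_nondeg x fun y => ?_).symm
    rw [← hform.neg, neg_eq_zero]
    exact hx y Submodule.mem_top
  | succ n ih =>
    ext x
    simp only [ucs, ih, Submodule.mem_iInf, Submodule.mem_comap, LinearMap.flip_apply,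
      LinearMap.BilinForm.mem_orthogonal_iff, form_mul_right_s18]
    constructor
    · intro h m hm
      have hle : S.lcs (n + 1) ≤ LinearMap.ker (S.form.flip x) :=
        Submodule.map₂_le.2 fun w hw y _ => h y w hw
      exact hle hm
    · intro h y w hw
      exact h _ (Submodule.apply_mem_map₂ S.mul hw Submodule.mem_top)

theorem finrank_ucs_add_finrank_lcs [FiniteDimensional 𝔽 L] (n : ℕ) :
    finrank 𝔽 (S.ucs n) + finrank 𝔽 (S.lcs n) = finrank 𝔽 L := by
  have hform : S.form.IsAlt := S.form_alt
  have hnd : LinearMap.BilinForm.Nondegenerate S.form :=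
    hform.isRefl.nondegenerate_iff_separatingLeft.2 S.form_nondeg
  rw [ucs_eq_orthogonal_lcs, LinearMap.BilinForm.finrank_orthogonal hnd]
  exact Nat.sub_add_cancel (Submodule.finrank_le _)

end SymplecticAlternatingAlgebra

theorem ucs_growth_inequality [FiniteDimensional 𝔽 L]
    (S : SymplecticAlternatingAlgebra 𝔽 L) (hnil : S.IsNilpotent) :
    ∀ i : ℕ, 2 ≤ i →
      2 * (Module.finrank 𝔽 (S.ucs i) - Module.finrank 𝔽 (S.ucs (i - 1))) ≤
        (Module.finrank 𝔽 (S.ucs (i - 1)) - Module.finrank 𝔽 (S.ucs (i - 2))) *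
          (Module.finrank 𝔽 (S.ucs (i - 1)) + Module.finrank 𝔽 (S.ucs (i - 2)) - 1) := by
  intro i hi
  obtain ⟨n, rfl⟩ := Nat.exists_eq_add_of_le' hi
  rw [show n + 2 - 1 = n + 1 from rfl, show n + 2 - 2 = n from rfl]
  have h0 := S.finrank_ucs_add_finrank_lcs n
  have h1 := S.finrank_ucs_add_finrank_lcs (n + 1)
  have h2 := S.finrank_ucs_add_finrank_lcs (n + 2)
  obtain ⟨r, hr⟩ := Nat.exists_eq_add_of_le (Submodule.finrank_mono (S.lcs_succ_le n))
  have key := two_mul_finrank_map₂_le S.mul S.mul_alt (S.lcs_succ_le n)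
    (le_refl (S.lcs (n + 2))) hr (s := finrank 𝔽 (S.ucs n)) (by lia)
  change 2 * finrank 𝔽 (S.lcs (n + 1)) ≤ _ at key
  have ha : finrank 𝔽 (S.ucs (n + 1)) = finrank 𝔽 (S.ucs n) + r := by lia
  have hb : 2 * (finrank 𝔽 (S.ucs (n + 2)) - finrank 𝔽 (S.ucs (n + 1))) ≤
      r * (r - 1) + 2 * (r * finrank 𝔽 (S.ucs n)) := by lia
  refine hb.trans (le_of_eq ?_)
  rw [ha, Nat.add_sub_cancel_left]
  -- The truncated `r - 1` is harmless: for `r = 0` both sides vanish.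
  rcases r with _ | k
  · simp
  · rw [Nat.add_sub_cancel,
      show ∀ a : ℕ, a + (k + 1) + a - 1 = 2 * a + k from fun a => by lia]
    ring
end
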